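/- Let q be a complex number with |q| = 1, and let V₁, V₂ be isometries on a complex Hilbert space H such that V = V₁V₂ is a shift. Let 𝔯_q be the unitary defined by 𝔯_q h = Σ_{n≥0} qⁿ Vⁿ(I − VV*)V^{*n}h. Then: (1) (V₁,V₂) is doubly commutative if and only if (V₁𝔯_q, 𝔯_{q̄}V₂) is doubly q-commutative; (2) (V₁,V₂) is doubly q-commutative if and only if (V₁𝔯_{q̄}, 𝔯_q V₂) is doubly commutative. -/

import Mathlib

open ContinuousLinearMap Filter

/-!
The series `R = ∑ cⁿ Vⁿ (1 - V V*) V*ⁿ` solves the fixed-point equation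
`R = (1 - V V*) + c V R V*`. When `V` is a shift and `‖c‖ ≤ 1` the solution is unique, because the
difference `X` of two solutions satisfies `‖X h‖ ≤ ‖X V*ⁿ h‖ → 0`. Solutions multiply and take
adjoints along with their weights, so uniqueness makes `R` unitary for `‖c‖ = 1`, with `R*` the
series of weight `c̄`.

Let `V = V₁ V₂` with `V₁`, `V₂` doubly `a`-commuting isometries, and let `R` be the rotation of
weight `b`. The relation `R V R* = b V` twists the first commutation relation by `b̄`. For the
second, `V₁* V = V₂` and `V* V₂ = ā V₁*` turn the fixed-point equation into
`V₁* R V₂ = ā b V₂ R V₁*`. Since `(V₁ R*) (R V₂) = V`, rotating the new pair by `R*` gives back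
`(V₁, V₂)`, whence the converse.
-/

section StarMonoid

variable {M : Type*} [Monoid M] [StarMul M] {u v w : M}

theorem star_mul_self_mul_eq_one (hv : star v * v = 1) (hw : star w * w = 1) :
    star (v * w) * (v * w) = 1 := by
  rw [star_mul, mul_assoc, ← mul_assoc (star v), hv, one_mul, hw]

theorem mul_star_mul_mul_cancel (hu : u ∈ unitary M) (x y : M) :
    x * star u * (u * y) = x * y := by
  rw [mul_assoc, ← mul_assoc (star u), Unitary.star_mul_self_of_mem hu, one_mul]

end StarMonoid

section StarAlgebra

variable {𝕜 A : Type*} [CommRing 𝕜] [Ring A] [StarRing A] [Algebra 𝕜 A]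

/-- The pair `(v₁, v₂)` is doubly `q`-commutative; for `q = 1` this is double commutativity. -/
def DoublyQCommute (q : 𝕜) (v₁ v₂ : A) : Prop :=
  v₁ * v₂ = q • (v₂ * v₁) ∧ v₂ * star v₁ = q • (star v₁ * v₂)

/-- `u` is a rotation of weight `c` along the isometry `v`: it fixes the range of the defect
projection `1 - v v*`, and transporting it by `v` multiplies it by `c`. This is encoded by the
fixed-point equation of the series `∑ cⁿ vⁿ (1 - v v*) v*ⁿ`, so that no topology is needed. -/
def IsRotation (v : A) (c : 𝕜) (u : A) : Prop :=
  u = (1 - v * star v) + c • (v * u * star v)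

namespace IsRotation

variable {v u w : A} {c d : 𝕜}

theorem one (v : A) : IsRotation v (1 : 𝕜) 1 := by
  simp [IsRotation]

theorem mul_eq_smul_mul (hu : IsRotation v c u) (hv : star v * v = 1) : u * v = c • (v * u) :=
  calc
    u * v = ((1 - v * star v) + c • (v * u * star v)) * v := congrArg (· * v) hu
    _ = c • (v * u) := by simp [add_mul, sub_mul, mul_assoc, hv]

theorem mul_defect (hu : IsRotation v c u) (hv : star v * v = 1) :
    u * (1 - v * star v) = 1 - v * star v :=
  calc
    u * (1 - v * star v) = u - c • (v * u * star v) := by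
      rw [mul_sub, mul_one, ← mul_assoc, hu.mul_eq_smul_mul hv, smul_mul_assoc]
    _ = 1 - v * star v := sub_eq_of_eq_add hu

theorem mul (hu : IsRotation v c u) (hw : IsRotation v d w) (hv : star v * v = 1) :
    IsRotation v (c * d) (u * w) :=
  calc
    u * w = u * ((1 - v * star v) + d • (v * w * star v)) := congrArg (u * ·) hw
    _ = (1 - v * star v) + d • (u * v * w * star v) := by
      rw [mul_add, hu.mul_defect hv, mul_smul_comm, ← mul_assoc, ← mul_assoc]
    _ = (1 - v * star v) + (c * d) • (v * (u * w) * star v) := by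
      simp only [hu.mul_eq_smul_mul hv, smul_mul_assoc, smul_smul, mul_assoc, mul_comm d c]

protected theorem star [StarRing 𝕜] [StarModule 𝕜 A] (hu : IsRotation v c u) :
    IsRotation v (star c) (star u) :=
  calc
    star u = star ((1 - v * star v) + c • (v * u * star v)) := congrArg star hu
    _ = (1 - v * star v) + star c • (v * star u * star v) := by simp [mul_assoc]

end IsRotation

variable [StarRing 𝕜] [StarModule 𝕜 A] {v₁ v₂ u : A} {a b : 𝕜}

theorem DoublyQCommute.star_mul_mul_of_isRotation (h : DoublyQCommute a v₁ v₂)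
    (ha : a ∈ unitary 𝕜) (hv₁ : star v₁ * v₁ = 1) (hv₂ : star v₂ * v₂ = 1)
    (hu : IsRotation (v₁ * v₂) b u) :
    star v₁ * u * v₂ = (star a * b) • (v₂ * u * star v₁) := by
  have left_cancel : star v₁ * (v₁ * v₂) = v₂ := by rw [← mul_assoc, hv₁, one_mul]
  have right_cancel : star (v₁ * v₂) * v₂ = star a • star v₁ := by
    rw [h.1, star_smul, star_mul, smul_mul_assoc, mul_assoc, hv₂, mul_one]
  have defect_eq_zero : star v₁ * (1 - v₁ * v₂ * star (v₁ * v₂)) * v₂ = 0 :=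
    calc
      _ = star v₁ * v₂ - star v₁ * (v₁ * v₂) * (star (v₁ * v₂) * v₂) := by noncomm_ring
      _ = star v₁ * v₂ - star a • (v₂ * star v₁) := by
        rw [left_cancel, right_cancel, mul_smul_comm]
      _ = 0 := by
        rw [h.2, smul_smul, Unitary.star_mul_self_of_mem ha, one_smul, sub_self]
  calc
    star v₁ * u * v₂
      = star v₁ * ((1 - v₁ * v₂ * star (v₁ * v₂)) + b • (v₁ * v₂ * u * star (v₁ * v₂))) * v₂ :=
        congrArg (star v₁ * · * v₂) hu
    _ = b • (star v₁ * (v₁ * v₂) * u * (star (v₁ * v₂) * v₂)) := by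
      rw [mul_add, add_mul, defect_eq_zero, zero_add, mul_smul_comm, smul_mul_assoc]
      simp only [mul_assoc]
    _ = (star a * b) • (v₂ * u * star v₁) := by
      rw [left_cancel, right_cancel, mul_smul_comm, smul_smul, mul_comm b]

theorem DoublyQCommute.rotate (h : DoublyQCommute a v₁ v₂) (ha : a ∈ unitary 𝕜)
    (hb : b ∈ unitary 𝕜) (hv₁ : star v₁ * v₁ = 1) (hv₂ : star v₂ * v₂ = 1)
    (hu : u ∈ unitary A) (hrot : IsRotation (v₁ * v₂) b u) :
    DoublyQCommute (a * star b) (v₁ * star u) (u * v₂) := by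
  have hv := star_mul_self_mul_eq_one hv₁ hv₂
  have conj_product : u * (v₁ * v₂) * star u = b • (v₁ * v₂) := by
    rw [hrot.mul_eq_smul_mul hv, smul_mul_assoc, mul_assoc, Unitary.mul_star_self_of_mem hu,
      mul_one]
  have weight_cancel : a * star b * (star a * b) = 1 := by
    linear_combination
      a * star a * Unitary.star_mul_self_of_mem hb + Unitary.mul_star_self_of_mem ha
  constructor
  · have swap : v₂ * v₁ = star a • (v₁ * v₂) := by
      rw [h.1, smul_smul, Unitary.star_mul_self_of_mem ha, one_smul]
    symm
    calc
      (a * star b) • (u * v₂ * (v₁ * star u))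
        = (a * star b) • (u * (v₂ * v₁) * star u) := by simp only [mul_assoc]
      _ = v₁ * v₂ := by
        rw [swap, mul_smul_comm, smul_mul_assoc, conj_product, smul_smul (star a), smul_smul,
          weight_cancel, one_smul]
      _ = v₁ * star u * (u * v₂) := (mul_star_mul_mul_cancel hu v₁ v₂).symm
  · rw [star_mul, star_star]
    symm
    calc
      (a * star b) • (u * star v₁ * (u * v₂))
        = (a * star b) • (u * (star v₁ * u * v₂)) := by simp only [mul_assoc]
      _ = u * (v₂ * u * star v₁) := by
        rw [h.star_mul_mul_of_isRotation ha hv₁ hv₂ hrot, mul_smul_comm, smul_smul,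
          weight_cancel, one_smul]
      _ = u * v₂ * (u * star v₁) := by simp only [mul_assoc]

theorem doublyQCommute_iff_rotate (ha : a ∈ unitary 𝕜) (hb : b ∈ unitary 𝕜)
    (hv₁ : star v₁ * v₁ = 1) (hv₂ : star v₂ * v₂ = 1) (hu : u ∈ unitary A)
    (hrot : IsRotation (v₁ * v₂) b u) :
    DoublyQCommute a v₁ v₂ ↔ DoublyQCommute (a * star b) (v₁ * star u) (u * v₂) := by
  refine ⟨fun h => h.rotate ha hb hv₁ hv₂ hu hrot, fun h => ?_⟩
  have hu' := Unitary.star_mem hu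
  have hrot' : IsRotation (v₁ * star u * (u * v₂)) (star b) (star u) := by
    simpa only [mul_star_mul_mul_cancel hu] using hrot.star
  have isometry₁ := star_mul_self_mul_eq_one hv₁ (Unitary.star_mul_self_of_mem hu')
  have isometry₂ := star_mul_self_mul_eq_one (Unitary.star_mul_self_of_mem hu) hv₂
  have rotated_back := h.rotate (mul_mem ha (Unitary.star_mem hb)) (Unitary.star_mem hb)
    isometry₁ isometry₂ hu' hrot'
  simpa only [star_star, mul_assoc, Unitary.star_mul_self_of_mem hb,
    Unitary.star_mul_self_of_mem hu, ← mul_assoc (star u) u, one_mul, mul_one] using rotated_back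

end StarAlgebra

theorem eq_add_of_hasSum_pow {𝕜 E : Type*} [CommRing 𝕜] [TopologicalSpace E] [AddCommGroup E]
    [Module 𝕜 E] [IsTopologicalAddGroup E] [ContinuousConstSMul 𝕜 E] [T2Space E] {c : 𝕜}
    {V P W R : E →L[𝕜] E}
    (hR : ∀ h, HasSum (fun n : ℕ => c ^ n • (V ^ n) (P ((W ^ n) h))) (R h)) :
    R = P + c • (V * R * W) := by
  ext h
  have tail : HasSum (fun n : ℕ => c ^ (n + 1) • (V ^ (n + 1)) (P ((W ^ (n + 1)) h)))
      (c • V (R (W h))) := by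
    simpa only [pow_succ' c, pow_succ' V, pow_succ W, mul_apply_eq_comp, map_smul, smul_smul]
      using (V.hasSum (hR (W h))).const_smul c
  have sub_eq : R h - P h = c • V (R (W h)) := by
    simpa using ((hasSum_nat_add_iff' 1).mpr (hR h)).unique tail
  exact sub_eq_iff_eq_add'.mp sub_eq

theorem eq_zero_of_norm_le_norm_comp_of_tendsto_pow {𝕜 E F : Type*} [NormedField 𝕜]
    [SeminormedAddCommGroup E] [NormedSpace 𝕜 E] [NormedAddCommGroup F] [NormedSpace 𝕜 F]
    {X : E →L[𝕜] F} {W : E →L[𝕜] E} (hX : ∀ h, ‖X h‖ ≤ ‖X (W h)‖)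
    (hW : ∀ h, Tendsto (fun n : ℕ => (W ^ n) h) atTop (nhds 0)) : X = 0 := by
  ext h
  have norm_le (n : ℕ) : ‖X h‖ ≤ ‖X ((W ^ n) h)‖ := by
    induction n with
    | zero => simp
    | succ n ih => simpa only [pow_succ', mul_apply_eq_comp] using ih.trans (hX _)
  have tendsto_zero : Tendsto (fun n : ℕ => ‖X ((W ^ n) h)‖) atTop (nhds 0) := by
    simpa using ((X.continuous.tendsto 0).comp (hW h)).norm
  simpa using ge_of_tendsto' tendsto_zero norm_le

section Hilbert

variable {𝕜 H : Type*} [RCLike 𝕜] [NormedAddCommGroup H] [InnerProductSpace 𝕜 H] [CompleteSpace H]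
  {V R S : H →L[𝕜] H} {c : 𝕜}

namespace IsRotation

theorem unique_of_shift (hR : IsRotation V c R) (hS : IsRotation V c S) (hc : ‖c‖ ≤ 1)
    (hV : star V * V = 1)
    (hshift : ∀ h : H, Tendsto (fun n : ℕ => (star V ^ n) h) atTop (nhds 0)) : R = S := by
  have sub_eq : R - S = c • (V * (R - S) * star V) := by
    conv_lhs => rw [hR, hS]
    rw [add_sub_add_left_eq_sub, ← smul_sub, mul_sub, sub_mul]
  have norm_map (x : H) : ‖V x‖ = ‖x‖ := V.norm_map_iff_adjoint_comp_self.mpr hV x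
  refine sub_eq_zero.mp
    (eq_zero_of_norm_le_norm_comp_of_tendsto_pow (W := star V) (fun h => ?_) hshift)
  calc
    ‖(R - S) h‖ = ‖c • V ((R - S) (star V h))‖ := congrArg norm (DFunLike.congr_fun sub_eq h)
    _ = ‖c‖ * ‖(R - S) (star V h)‖ := by rw [norm_smul, norm_map]
    _ ≤ ‖(R - S) (star V h)‖ := mul_le_of_le_one_left (norm_nonneg _) hc

theorem mem_unitary (hR : IsRotation V c R) (hc : c ∈ unitary 𝕜) (hV : star V * V = 1)
    (hshift : ∀ h : H, Tendsto (fun n : ℕ => (star V ^ n) h) atTop (nhds 0)) :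
    R ∈ unitary (H →L[𝕜] H) := by
  have eq_one {T : H →L[𝕜] H} (hT : IsRotation V (1 : 𝕜) T) : T = 1 :=
    hT.unique_of_shift (one V) norm_one.le hV hshift
  refine Unitary.mem_iff.mpr ⟨eq_one ?_, eq_one ?_⟩
  · simpa only [Unitary.star_mul_self_of_mem hc] using hR.star.mul hR hV
  · simpa only [Unitary.mul_star_self_of_mem hc] using hR.mul hR.star hV

end IsRotation

theorem stmt_12_general {q : 𝕜} (hq : ‖q‖ = 1) {V₁ V₂ R R' : H →L[𝕜] H}
    (hV₁ : star V₁ * V₁ = 1) (hV₂ : star V₂ * V₂ = 1)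
    (hshift : ∀ h : H, Tendsto (fun n : ℕ => (star (V₁ * V₂) ^ n) h) atTop (nhds 0))
    (hR : ∀ h : H, HasSum (fun n : ℕ => q ^ n • ((V₁ * V₂) ^ n)
      ((1 - V₁ * V₂ * star (V₁ * V₂)) ((star (V₁ * V₂) ^ n) h))) (R h))
    (hR' : ∀ h : H, HasSum (fun n : ℕ => star q ^ n • ((V₁ * V₂) ^ n)
      ((1 - V₁ * V₂ * star (V₁ * V₂)) ((star (V₁ * V₂) ^ n) h))) (R' h)) :
    (DoublyQCommute (1 : 𝕜) V₁ V₂ ↔ DoublyQCommute q (V₁ * R) (R' * V₂)) ∧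
      (DoublyQCommute q V₁ V₂ ↔ DoublyQCommute (1 : 𝕜) (V₁ * R') (R * V₂)) := by
  have hV := star_mul_self_mul_eq_one hV₁ hV₂
  have hq_unitary : q ∈ unitary 𝕜 := by simp [Unitary.mem_iff_self_mul_star, RCLike.mul_conj, hq]
  have rotation : IsRotation (V₁ * V₂) q R := eq_add_of_hasSum_pow hR
  have rotation' : IsRotation (V₁ * V₂) (star q) R' := eq_add_of_hasSum_pow hR'
  have unitary_R := rotation.mem_unitary hq_unitary hV hshift
  obtain rfl : R' = star R :=
    rotation'.unique_of_shift rotation.star ((norm_star q).trans hq).le hV hshift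
  constructor
  · simpa only [star_star, one_mul] using doublyQCommute_iff_rotate (one_mem _)
      (Unitary.star_mem hq_unitary) hV₁ hV₂ (Unitary.star_mem unitary_R) rotation'
  · simpa only [Unitary.mul_star_self_of_mem hq_unitary] using
      doublyQCommute_iff_rotate hq_unitary hq_unitary hV₁ hV₂ unitary_R rotation

end Hilbert

theorem stmt_12 {H : Type*} [NormedAddCommGroup H] [InnerProductSpace ℂ H] [CompleteSpace H]
    (q : ℂ) (hq : ‖q‖ = 1) (V₁ V₂ : H →L[ℂ] H)
    (hV₁ : adjoint V₁ ∘L V₁ = 1) (hV₂ : adjoint V₂ ∘L V₂ = 1)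
    (hshift : ∀ h : H,
      Tendsto (fun n : ℕ => ((adjoint (V₁ ∘L V₂)) ^ n) h) atTop (nhds 0))
    (𝔯q 𝔯q' : H →L[ℂ] H)
    (h𝔯q : ∀ h : H, HasSum
      (fun n : ℕ => q ^ n • (((V₁ ∘L V₂) ^ n)
        ((1 - (V₁ ∘L V₂) ∘L adjoint (V₁ ∘L V₂)) (((adjoint (V₁ ∘L V₂)) ^ n) h))))
      (𝔯q h))
    (h𝔯q' : ∀ h : H, HasSum
      (fun n : ℕ => (starRingEnd ℂ q) ^ n • (((V₁ ∘L V₂) ^ n)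
        ((1 - (V₁ ∘L V₂) ∘L adjoint (V₁ ∘L V₂)) (((adjoint (V₁ ∘L V₂)) ^ n) h))))
      (𝔯q' h)) :
    ((V₁ ∘L V₂ = V₂ ∘L V₁ ∧ V₂ ∘L adjoint V₁ = adjoint V₁ ∘L V₂) ↔
      ((V₁ ∘L 𝔯q) ∘L (𝔯q' ∘L V₂) = q • ((𝔯q' ∘L V₂) ∘L (V₁ ∘L 𝔯q)) ∧
        (𝔯q' ∘L V₂) ∘L adjoint (V₁ ∘L 𝔯q)
          = q • (adjoint (V₁ ∘L 𝔯q) ∘L (𝔯q' ∘L V₂)))) ∧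
    ((V₁ ∘L V₂ = q • (V₂ ∘L V₁) ∧ V₂ ∘L adjoint V₁ = q • (adjoint V₁ ∘L V₂)) ↔
      ((V₁ ∘L 𝔯q') ∘L (𝔯q ∘L V₂) = (𝔯q ∘L V₂) ∘L (V₁ ∘L 𝔯q') ∧
        (𝔯q ∘L V₂) ∘L adjoint (V₁ ∘L 𝔯q')
          = adjoint (V₁ ∘L 𝔯q') ∘L (𝔯q ∘L V₂))) := by
  simpa only [DoublyQCommute, one_smul, mul_def, star_eq_adjoint]
    using stmt_12_general hq hV₁ hV₂ hshift h𝔯q h𝔯q'
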